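/- Let A and B be nonzero n×n matrices with nonnegative real entries, let g ∈ ℝ^n be nonnegative and h ∈ ℝ^n positive with g ≤ h (entrywise), define λ, μ, γ, δ, and the functions G and H as follows: λ = max_{k=1,…,n} (tr(A^{⊗k}))^{1/k}, μ = max_{k=1,…,n} (tr(B^{⊗k}))^{1/k}, γ = max_{k=1,…,n−1} (h^− A^{⊗k} g)^{1/k}, δ = max_{k=1,…,n−1} (h^− B^{⊗k} g)^{1/k}, G(s) = max( max_{k=1,…,n−1} max_{m=1,…,n−k} s^{−m/k}·(tr F_{km})^{1/k}, max_{k=1,…,n−2} max_{m=1,…,n−k−1} s^{−m/k}·(h^− F_{km} g)^{1/k} ), and H(t) = max( max_{k=1,…,n−1} max_{m=1,…,n−k} t^{−k/m}·(tr F_{km})^{1/m}, max_{k=1,…,n−2} max_{m=1,…,n−k−1} t^{−k/m}·(h^− F_{km} g)^{1/m} ) for s, t > 0. Assume max(λ, γ) > 0, max(μ, δ) > 0, and H(max(μ, δ)) ≤ max(λ, γ). Then there exists a positive vector x ∈ ℝ^n with g ≤ x ≤ h such that max_{i,j} A_{ij}·x_j/x_i = max(λ, γ) and max_{i,j} B_{ij}·x_j/x_i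 = max(μ, δ); moreover every positive vector x with g ≤ x ≤ h satisfies max_{i,j} A_{ij}·x_j/x_i ≥ max(λ, γ) and max_{i,j} B_{ij}·x_j/x_i ≥ max(μ, δ). In particular, the Pareto front of the bi-objective problem of minimizing (max_{i,j} A_{ij} x_j/x_i, max_{i,j} B_{ij} x_j/x_i) subject to g ≤ x ≤ h reduces to the single point (max(λ, γ), max(μ, δ)). -/

import Mathlib

/-!
Write `a = max(λ, γ)` and `b = max(μ, δ)`.

*Lower bounds.* If `x` is feasible and `c` is the objective value of `A` at `x`, then
`A i j * x j ≤ c * x i`, hence `(A^{⊗k}) i j * x j ≤ c ^ k * x i` for all `k`. Taking `i = j` bounds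
the traces, and `g ≤ x ≤ h` bounds `h^- A^{⊗k} g`, so `a ≤ c` (`le_obj`). The same holds for `B`.

*Attainment.* By the lower bounds it suffices to find a feasible `x` with `C ⊗ x ≤ x`, where
`C = max(A / a, B / b)`. A walk of length `k` has some number `r` of `A`-steps and `s` of `B`-steps,
with `r + s = k`, so its `C`-weight times `a ^ r * b ^ s` is bounded by the corresponding entry of
`F_{sr}`, of `A^{⊗r}` if `s = 0`, and of `B^{⊗s}` if `r = 0` (`walk_le`). The definitions of `a` and
`b` and the hypothesis `H(b) ≤ a` thus imply that closed walks of length at most `n` have weight at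
most `1`, and that walks from `i` to `j` of length less than `n` have weight `w` with
`w * g j ≤ h i`. Removing closed walks extends the latter bound to all lengths (`walk_reduce`), and
then `x i = 1 / sup (weight / h (start))`, the supremum being over all walks that end at `i`, is as
desired (`exists_potential`).
-/

open scoped BigOperators

/-- Max-times matrix product: `(A ⊗ B) i j = max_k A i k * B k j`. -/
noncomputable def mtMul {n : ℕ} (A B : Matrix (Fin n) (Fin n) ℝ) : Matrix (Fin n) (Fin n) ℝ :=
  fun i j => ⨆ k, A i k * B k j

/-- Max-times matrix power, with `A^{⊗0}` the identity matrix. -/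
noncomputable def mtPow {n : ℕ} (A : Matrix (Fin n) (Fin n) ℝ) : ℕ → Matrix (Fin n) (Fin n) ℝ
  | 0 => 1
  | k + 1 => mtMul A (mtPow A k)

/-- Tropical trace: `tr A = max_i A i i`. -/
noncomputable def mtTrace {n : ℕ} (A : Matrix (Fin n) (Fin n) ℝ) : ℝ :=
  ⨆ i, A i i

/-- The function `Tr(A) = max_{k=1,…,n} tr(A^{⊗k})`. -/
noncomputable def mtTr {n : ℕ} (A : Matrix (Fin n) (Fin n) ℝ) : ℝ :=
  ⨆ k ∈ Finset.Icc 1 n, mtTrace (mtPow A k)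

/-- Kleene star: entrywise maximum of `I, A, A^{⊗2}, …, A^{⊗(n-1)}`. -/
noncomputable def mtStar {n : ℕ} (A : Matrix (Fin n) (Fin n) ℝ) : Matrix (Fin n) (Fin n) ℝ :=
  fun i j => ⨆ k ∈ Finset.range n, mtPow A k i j

/-- Max-times matrix-vector product: `(A ⊗ x) i = max_j A i j * x j`. -/
noncomputable def mtVec {n : ℕ} (A : Matrix (Fin n) (Fin n) ℝ) (x : Fin n → ℝ) : Fin n → ℝ :=
  fun i => ⨆ j, A i j * x j

/-- The alternating product `A^{⊗v 0} ⊗ B ⊗ A^{⊗v 1} ⊗ B ⊗ ⋯ ⊗ B ⊗ A^{⊗v k}`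
(with exactly `k` factors `B`). -/
noncomputable def mtChain {n : ℕ} (A B : Matrix (Fin n) (Fin n) ℝ) :
    (k : ℕ) → (Fin (k + 1) → ℕ) → Matrix (Fin n) (Fin n) ℝ
  | 0, v => mtPow A (v 0)
  | k + 1, v => mtMul (mtPow A (v 0)) (mtMul B (mtChain A B k fun t => v t.succ))

/-- `F_{km}`: the entrywise maximum, over all tuples `(i_0,…,i_k)` of nonnegative integers
with `i_0 + ⋯ + i_k = m`, of the products `A^{⊗i_0} ⊗ B ⊗ A^{⊗i_1} ⊗ ⋯ ⊗ B ⊗ A^{⊗i_k}`. -/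
noncomputable def mtF {n : ℕ} (A B : Matrix (Fin n) (Fin n) ℝ) (k m : ℕ) :
    Matrix (Fin n) (Fin n) ℝ :=
  fun i j => ⨆ v : { v : Fin (k + 1) → ℕ // ∑ t, v t = m }, mtChain A B k v.1 i j

/-- `h^− M g = max_{i,j} M i j * g j / h i`. -/
noncomputable def mtHMG {n : ℕ} (h : Fin n → ℝ) (M : Matrix (Fin n) (Fin n) ℝ)
    (g : Fin n → ℝ) : ℝ :=
  ⨆ i, ⨆ j, M i j * g j / h i

/-- Max-times spectral radius `λ = max_{k=1,…,n} (tr(A^{⊗k}))^{1/k}`. -/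
noncomputable def mtSpecR {n : ℕ} (A : Matrix (Fin n) (Fin n) ℝ) : ℝ :=
  ⨆ k ∈ Finset.Icc 1 n, (mtTrace (mtPow A k)) ^ (1 / (k : ℝ))

/-- `γ = max_{k=1,…,n-1} (h^− A^{⊗k} g)^{1/k}`. -/
noncomputable def mtBnd {n : ℕ} (h : Fin n → ℝ) (A : Matrix (Fin n) (Fin n) ℝ)
    (g : Fin n → ℝ) : ℝ :=
  ⨆ k ∈ Finset.Icc 1 (n - 1), (mtHMG h (mtPow A k) g) ^ (1 / (k : ℝ))

/-- The function `G`. -/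
noncomputable def mtG {n : ℕ} (A B : Matrix (Fin n) (Fin n) ℝ) (h g : Fin n → ℝ)
    (s : ℝ) : ℝ :=
  max (⨆ k ∈ Finset.Icc 1 (n - 1), ⨆ m ∈ Finset.Icc 1 (n - k),
        s ^ (-(m : ℝ) / (k : ℝ)) * (mtTrace (mtF A B k m)) ^ (1 / (k : ℝ)))
      (⨆ k ∈ Finset.Icc 1 (n - 2), ⨆ m ∈ Finset.Icc 1 (n - k - 1),
        s ^ (-(m : ℝ) / (k : ℝ)) * (mtHMG h (mtF A B k m) g) ^ (1 / (k : ℝ)))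

/-- The function `H`. -/
noncomputable def mtH {n : ℕ} (A B : Matrix (Fin n) (Fin n) ℝ) (h g : Fin n → ℝ)
    (t : ℝ) : ℝ :=
  max (⨆ k ∈ Finset.Icc 1 (n - 1), ⨆ m ∈ Finset.Icc 1 (n - k),
        t ^ (-(k : ℝ) / (m : ℝ)) * (mtTrace (mtF A B k m)) ^ (1 / (m : ℝ)))
      (⨆ k ∈ Finset.Icc 1 (n - 2), ⨆ m ∈ Finset.Icc 1 (n - k - 1),
        t ^ (-(k : ℝ) / (m : ℝ)) * (mtHMG h (mtF A B k m) g) ^ (1 / (m : ℝ)))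

/-! ### Finite suprema of reals -/

section Suprema

lemma le_biSup_finset {ι : Type*} (S : Finset ι) (f : ι → ℝ) {k : ι} (hk : k ∈ S) :
    f k ≤ ⨆ k ∈ S, f k := by
  classical
  -- Outside `S` the inner supremum is over an empty type, hence `0`.
  have hfin : (Set.range fun k => ⨆ _ : k ∈ S, f k).Finite := by
    refine ((S.finite_toSet.image f).union (Set.finite_singleton (0 : ℝ))).subset ?_
    rintro _ ⟨j, rfl⟩
    by_cases hj : j ∈ S
    · left
      exact ⟨j, hj, by simp [hj]⟩
    · right
      simp [hj]
  have := le_ciSup hfin.bddAbove k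
  simpa [hk] using this

lemma biSup_finset_le {ι : Type*} (S : Finset ι) (f : ι → ℝ) {c : ℝ} (hc : 0 ≤ c)
    (hf : ∀ k ∈ S, f k ≤ c) : ⨆ k ∈ S, f k ≤ c :=
  Real.iSup_le (fun k => Real.iSup_le (fun hk => hf k hk) hc) hc

lemma le_iSup_fin {ι : Type*} [Finite ι] (f : ι → ℝ) (i : ι) : f i ≤ ⨆ i, f i :=
  le_ciSup (Set.finite_range f).bddAbove i

lemma le_iSup_fin₂ {ι κ : Type*} [Finite ι] [Finite κ] (f : ι → κ → ℝ) (i : ι) (j : κ) :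
    f i j ≤ ⨆ i, ⨆ j, f i j :=
  (le_iSup_fin (f i) j).trans (le_iSup_fin (fun i => ⨆ j, f i j) i)

end Suprema

/-! ### Real roots -/

section Roots

lemma root_le {x c : ℝ} (hx : 0 ≤ x) (hc : 0 ≤ c) {k : ℕ} (hk : k ≠ 0) (h : x ≤ c ^ k) :
    x ^ (1 / (k : ℝ)) ≤ c := by
  rw [one_div]
  calc x ^ ((k : ℝ)⁻¹) ≤ (c ^ k) ^ ((k : ℝ)⁻¹) := Real.rpow_le_rpow hx h (by positivity)
    _ = c := Real.pow_rpow_inv_natCast hc hk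

lemma le_pow_of_root {x c : ℝ} (hx : 0 ≤ x) {k : ℕ} (hk : k ≠ 0)
    (h : x ^ (1 / (k : ℝ)) ≤ c) : x ≤ c ^ k := by
  rw [one_div] at h
  calc x = (x ^ ((k : ℝ)⁻¹)) ^ k := (Real.rpow_inv_natCast_pow hx hk).symm
    _ ≤ c ^ k := pow_le_pow_left₀ (Real.rpow_nonneg hx _) h k

lemma le_mul_pow_of_root {x a b : ℝ} (hx : 0 ≤ x) (hb : 0 < b) {k m : ℕ} (hm : m ≠ 0)
    (h : b ^ (-(k : ℝ) / (m : ℝ)) * x ^ (1 / (m : ℝ)) ≤ a) : x ≤ a ^ m * b ^ k := by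
  have h1 := pow_le_pow_left₀ (by positivity) h m
  rw [mul_pow, one_div, Real.rpow_inv_natCast_pow hx hm, ← Real.rpow_natCast (b ^ _) m,
    ← Real.rpow_mul hb.le, div_mul_cancel₀ _ (by exact_mod_cast hm), Real.rpow_neg hb.le,
    Real.rpow_natCast] at h1
  have hbk : 0 < b ^ k := pow_pos hb k
  rwa [inv_mul_le_iff₀ hbk, mul_comm] at h1

end Roots

/-! ### Nonnegativity -/

section Nonneg

variable {n : ℕ} {A B : Matrix (Fin n) (Fin n) ℝ}

lemma mtMul_nonneg (hA : ∀ i j, 0 ≤ A i j) (hB : ∀ i j, 0 ≤ B i j) (i j : Fin n) :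
    0 ≤ mtMul A B i j :=
  Real.iSup_nonneg fun k => mul_nonneg (hA i k) (hB k j)

lemma mtPow_nonneg (hA : ∀ i j, 0 ≤ A i j) (k : ℕ) : ∀ i j, 0 ≤ mtPow A k i j := by
  induction k with
  | zero =>
    intro i j
    simp only [mtPow, Matrix.one_apply]
    split_ifs <;> norm_num
  | succ k ih => exact mtMul_nonneg hA ih

lemma mtChain_nonneg (hA : ∀ i j, 0 ≤ A i j) (hB : ∀ i j, 0 ≤ B i j) (k : ℕ) :
    ∀ v i j, 0 ≤ mtChain A B k v i j := by
  induction k with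
  | zero => exact fun v => mtPow_nonneg hA _
  | succ k ih => exact fun v => mtMul_nonneg (mtPow_nonneg hA _) (mtMul_nonneg hB (ih _))

lemma mtF_nonneg (hA : ∀ i j, 0 ≤ A i j) (hB : ∀ i j, 0 ≤ B i j) (k m : ℕ) (i j : Fin n) :
    0 ≤ mtF A B k m i j :=
  Real.iSup_nonneg fun v => mtChain_nonneg hA hB k v.1 i j

lemma mtTrace_nonneg (hA : ∀ i j, 0 ≤ A i j) : 0 ≤ mtTrace A :=
  Real.iSup_nonneg fun i => hA i i

lemma mtHMG_nonneg {g h : Fin n → ℝ} (hg : ∀ i, 0 ≤ g i) (hh : ∀ i, 0 < h i)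
    (hA : ∀ i j, 0 ≤ A i j) : 0 ≤ mtHMG h A g :=
  Real.iSup_nonneg fun i => Real.iSup_nonneg fun j =>
    div_nonneg (mul_nonneg (hA i j) (hg j)) (hh i).le

end Nonneg

/-! ### Lower bounds for the objectives -/

section LowerBound

variable {n : ℕ} {A : Matrix (Fin n) (Fin n) ℝ}

lemma mtPow_mul_le (hA : ∀ i j, 0 ≤ A i j) {x : Fin n → ℝ} (hx : ∀ i, 0 < x i) {c : ℝ}
    (hc : 0 ≤ c) (hAx : ∀ i j, A i j * x j ≤ c * x i) (k : ℕ) :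
    ∀ i j, mtPow A k i j * x j ≤ c ^ k * x i := by
  induction k with
  | zero =>
    intro i j
    simp only [mtPow, Matrix.one_apply, pow_zero, one_mul]
    split_ifs with hij
    · simp [hij]
    · simpa using (hx i).le
  | succ k ih =>
    intro i j
    rw [← le_div_iff₀ (hx j)]
    refine Real.iSup_le (fun l => ?_) (div_nonneg (mul_nonneg (pow_nonneg hc _) (hx i).le) (hx j).le)
    rw [le_div_iff₀ (hx j)]
    calc A i l * mtPow A k l j * x j = A i l * (mtPow A k l j * x j) := by ring
      _ ≤ A i l * (c ^ k * x l) := mul_le_mul_of_nonneg_left (ih l j) (hA i l)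
      _ = c ^ k * (A i l * x l) := by ring
      _ ≤ c ^ k * (c * x i) := mul_le_mul_of_nonneg_left (hAx i l) (pow_nonneg hc k)
      _ = c ^ (k + 1) * x i := by ring

lemma le_obj (hA : ∀ i j, 0 ≤ A i j) {g h x : Fin n → ℝ} (hg : ∀ i, 0 ≤ g i)
    (hh : ∀ i, 0 < h i) (hx : ∀ i, 0 < x i) (hgx : ∀ i, g i ≤ x i) (hxh : ∀ i, x i ≤ h i) :
    max (mtSpecR A) (mtBnd h A g) ≤ ⨆ i, ⨆ j, A i j * x j / x i := by
  set c := ⨆ i, ⨆ j, A i j * x j / x i with hcdef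
  have hc : 0 ≤ c := Real.iSup_nonneg fun i => Real.iSup_nonneg fun j =>
    div_nonneg (mul_nonneg (hA i j) (hx j).le) (hx i).le
  have hAx : ∀ i j, A i j * x j ≤ c * x i := fun i j => by
    rw [← div_le_iff₀ (hx i)]
    exact le_iSup_fin₂ (fun i j => A i j * x j / x i) i j
  have hpow := mtPow_mul_le hA hx hc hAx
  refine max_le ?_ ?_
  · refine biSup_finset_le _ _ hc fun k hk => ?_
    have hk0 : k ≠ 0 := by have := (Finset.mem_Icc.1 hk).1; omega
    refine root_le (mtTrace_nonneg (mtPow_nonneg hA k)) hc hk0 ?_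
    exact Real.iSup_le (fun i => le_of_mul_le_mul_right (hpow k i i) (hx i)) (pow_nonneg hc k)
  · refine biSup_finset_le _ _ hc fun k hk => ?_
    have hk0 : k ≠ 0 := by have := (Finset.mem_Icc.1 hk).1; omega
    refine root_le (mtHMG_nonneg hg hh (mtPow_nonneg hA k)) hc hk0 ?_
    refine Real.iSup_le (fun i => Real.iSup_le (fun j => ?_) (pow_nonneg hc k)) (pow_nonneg hc k)
    rw [div_le_iff₀ (hh i)]
    calc mtPow A k i j * g j ≤ mtPow A k i j * x j :=
          mul_le_mul_of_nonneg_left (hgx j) (mtPow_nonneg hA k i j)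
      _ ≤ c ^ k * x i := hpow k i j
      _ ≤ c ^ k * h i := mul_le_mul_of_nonneg_left (hxh i) (pow_nonneg hc k)

end LowerBound

/-! ### Walk weights and potentials -/

section Walks

variable {n : ℕ} {C : Matrix (Fin n) (Fin n) ℝ}

/-- The weight of the walk `p 0, p 1, …, p k` with respect to `C`, that is, the product of the
entries `C (p t) (p (t + 1))` for `t < k`. A walk is encoded as a sequence together with a length,
the values of `p` beyond `k` being irrelevant. -/
noncomputable def walkWt (C : Matrix (Fin n) (Fin n) ℝ) (p : ℕ → Fin n) (k : ℕ) : ℝ :=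
  ∏ t ∈ Finset.range k, C (p t) (p (t + 1))

lemma walkWt_nonneg (hC : ∀ i j, 0 ≤ C i j) (p : ℕ → Fin n) (k : ℕ) : 0 ≤ walkWt C p k :=
  Finset.prod_nonneg fun _ _ => hC _ _

lemma walkWt_add (p : ℕ → Fin n) (k l : ℕ) :
    walkWt C p (k + l) = walkWt C p k * walkWt C (fun t => p (k + t)) l := by
  simp only [walkWt, Finset.prod_range_add, add_assoc]

lemma walkWt_congr {p q : ℕ → Fin n} {k : ℕ} (hpq : ∀ t ≤ k, p t = q t) :
    walkWt C p k = walkWt C q k := by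
  refine Finset.prod_congr rfl fun t ht => ?_
  have := Finset.mem_range.1 ht
  rw [hpq t (by omega), hpq (t + 1) (by omega)]

/-- If closed walks of length at most `n` have weight at most `1`, every walk is dominated by one
of length less than `n` with the same endpoints: a walk of length at least `n` repeats a vertex
among its first `n + 1`, and the closed walk in between can be removed. -/
lemma walk_reduce (hC : ∀ i j, 0 ≤ C i j)
    (hcyc : ∀ (p : ℕ → Fin n) (k : ℕ), 1 ≤ k → k ≤ n → p k = p 0 → walkWt C p k ≤ 1)
    (k : ℕ) : ∀ p : ℕ → Fin n, ∃ (l : ℕ) (q : ℕ → Fin n),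
      l < n ∧ q 0 = p 0 ∧ q l = p k ∧ walkWt C p k ≤ walkWt C q l := by
  induction k using Nat.strong_induction_on with
  | _ k ih =>
    intro p
    by_cases hk : k < n
    · exact ⟨k, p, hk, rfl, rfl, le_rfl⟩
    push Not at hk
    obtain ⟨i, d, hd, hid, hp⟩ : ∃ i d, 1 ≤ d ∧ i + d ≤ n ∧ p (i + d) = p i := by
      obtain ⟨u, v, huv, h⟩ := Fintype.exists_ne_map_eq_of_card_lt
        (fun t : Fin (n + 1) => p t) (by simp)
      have hne : (u : ℕ) ≠ v := fun e => huv (Fin.ext e)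
      have hu := u.2
      have hv := v.2
      rcases lt_or_gt_of_ne hne with hlt | hlt
      · exact ⟨u, v - u, by omega, by omega, by
          rw [Nat.add_sub_cancel' hlt.le]; exact h.symm⟩
      · exact ⟨v, u - v, by omega, by omega, by
          rw [Nat.add_sub_cancel' hlt.le]; exact h⟩
    obtain ⟨e, rfl⟩ : ∃ e, k = i + d + e := ⟨k - (i + d), by omega⟩
    let q : ℕ → Fin n := fun t => if t ≤ i then p t else p (t + d)
    have hq1 : ∀ t ≤ i, q t = p t := fun t ht => by simp [q, ht]
    have hq2 : ∀ t, q (i + t) = p (i + d + t) := fun t => by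
      rcases Nat.eq_zero_or_pos t with rfl | ht
      · rw [add_zero, add_zero, hq1 i le_rfl, hp]
      · have : ¬ i + t ≤ i := by omega
        simp only [q, this, if_false]
        congr 1
        omega
    have hle : walkWt C p (i + d + e) ≤ walkWt C q (i + e) := by
      have h1 : walkWt C q i = walkWt C p i := walkWt_congr hq1
      have h2 : walkWt C (fun t => q (i + t)) e = walkWt C (fun t => p (i + d + t)) e :=
        walkWt_congr fun t _ => hq2 t
      rw [walkWt_add, walkWt_add, walkWt_add, h1, h2]
      refine mul_le_mul_of_nonneg_right ?_ (walkWt_nonneg hC _ _)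
      refine mul_le_of_le_one_right (walkWt_nonneg hC _ _) ?_
      exact hcyc _ d hd (by omega) (by simpa using hp)
    obtain ⟨l, r, hl, h0, h1, h2⟩ := ih (i + e) (by omega) q
    exact ⟨l, r, hl, h0.trans (hq1 0 (Nat.zero_le _)), h1.trans (hq2 e), hle.trans h2⟩

lemma exists_potential (hC : ∀ i j, 0 ≤ C i j) {g h : Fin n → ℝ} (hg : ∀ i, 0 ≤ g i)
    (hh : ∀ i, 0 < h i)
    (hcyc : ∀ (p : ℕ → Fin n) (k : ℕ), 1 ≤ k → k ≤ n → p k = p 0 → walkWt C p k ≤ 1)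
    (hpath : ∀ (p : ℕ → Fin n) (k : ℕ), k < n → walkWt C p k * g (p k) ≤ h (p 0)) :
    ∃ x : Fin n → ℝ, (∀ i, 0 < x i) ∧ (∀ i, g i ≤ x i) ∧ (∀ i, x i ≤ h i) ∧
      ∀ i j, C i j * x j ≤ x i := by
  let S : Fin n → Set ℝ := fun i => {w | ∃ p k, p k = i ∧ w = walkWt C p k / h (p 0)}
  have hbdd : ∀ i, BddAbove (S i) := by
    intro i
    -- After reduction only walks of length less than `n` matter; `M ≥ 1` bounds every entry.
    set M : ℝ := max 1 (⨆ i, ⨆ j, C i j) with hM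
    have hM1 : 1 ≤ M := le_max_left _ _
    have hCM : ∀ i j, C i j ≤ M := fun i j => (le_iSup_fin₂ C i j).trans (le_max_right _ _)
    refine ⟨M ^ n * ⨆ i, 1 / h i, ?_⟩
    rintro w ⟨p, k, -, rfl⟩
    obtain ⟨l, q, hl, h0, -, hle⟩ := walk_reduce hC hcyc k p
    have h1 : walkWt C q l ≤ M ^ n := by
      calc walkWt C q l ≤ ∏ t ∈ Finset.range l, M :=
            Finset.prod_le_prod (fun _ _ => hC _ _) fun _ _ => hCM _ _
        _ = M ^ l := by simp
        _ ≤ M ^ n := pow_le_pow_right₀ hM1 hl.le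
    rw [div_eq_mul_one_div]
    exact mul_le_mul (hle.trans h1) (le_iSup_fin (fun i => 1 / h i) (p 0))
      (one_div_nonneg.2 (hh _).le) (by positivity)
  let y : Fin n → ℝ := fun i => sSup (S i)
  have hmem : ∀ i, 1 / h i ∈ S i := fun i => ⟨fun _ => i, 0, rfl, by simp [walkWt]⟩
  have hyh : ∀ i, 1 / h i ≤ y i := fun i => le_csSup (hbdd i) (hmem i)
  have hy : ∀ i, 0 < y i := fun i => (one_div_pos.2 (hh i)).trans_le (hyh i)
  refine ⟨fun i => 1 / y i, fun i => one_div_pos.2 (hy i), fun i => ?_, fun i => ?_,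
    fun i j => ?_⟩
  · rcases (hg i).eq_or_lt with h0 | hpos
    · rw [← h0]
      exact (one_div_pos.2 (hy i)).le
    rw [le_one_div hpos (hy i)]
    refine csSup_le ⟨_, hmem i⟩ ?_
    rintro w ⟨p, k, hp, rfl⟩
    obtain ⟨l, q, hl, h0, h1, hle⟩ := walk_reduce hC hcyc k p
    have h2 := hpath q l hl
    rw [h0, h1, hp] at h2
    rw [div_le_div_iff₀ (hh _) hpos, one_mul]
    exact (mul_le_mul_of_nonneg_right hle hpos.le).trans h2
  · rw [one_div_le (hy i) (hh i)]
    exact hyh i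
  · -- Appending the step from `i` to `j` to the walks ending at `i` gives `y i * C i j ≤ y j`.
    have key : y i * C i j ≤ y j := by
      rcases (hC i j).eq_or_lt with h0 | hpos
      · rw [← h0, mul_zero]
        exact (hy j).le
      rw [← le_div_iff₀ hpos]
      refine csSup_le ⟨_, hmem i⟩ ?_
      rintro w ⟨p, k, hp, rfl⟩
      rw [le_div_iff₀ hpos]
      refine le_csSup (hbdd j) ⟨fun t => if t ≤ k then p t else j, k + 1, by simp, ?_⟩
      have h1 : walkWt C (fun t => if t ≤ k then p t else j) k = walkWt C p k :=
        walkWt_congr fun t ht => by simp [ht]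
      rw [walkWt_add, h1]
      simp [walkWt, hp]
      ring
    rw [mul_one_div, div_le_div_iff₀ (hy j) (hy i)]
    linarith

end Walks

/-! ### Walks and max-times products -/

section WalkCount

variable {n : ℕ} {A B : Matrix (Fin n) (Fin n) ℝ}

instance finite_sum_eq (k m : ℕ) : Finite { v : Fin (k + 1) → ℕ // ∑ t, v t = m } := by
  refine Set.Finite.to_subtype (s := {v : Fin (k + 1) → ℕ | ∑ t, v t = m}) ?_
  refine (Set.finite_Iic (fun _ : Fin (k + 1) => m)).subset fun v hv t => ?_
  have hv' : ∑ t, v t = m := hv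
  rw [← hv']
  exact Finset.single_le_sum (f := v) (fun _ _ => Nat.zero_le _) (Finset.mem_univ t)

lemma mul_le_mtMul (M N : Matrix (Fin n) (Fin n) ℝ) (i l j : Fin n) :
    M i l * N l j ≤ mtMul M N i j :=
  le_iSup_fin (fun l => M i l * N l j) l

lemma mul_mtMul_le {M N P : Matrix (Fin n) (Fin n) ℝ} (hM : ∀ i j, 0 ≤ M i j)
    (hP : ∀ i j, 0 ≤ P i j) {c : ℝ} {i l : Fin n} (hc : 0 ≤ c)
    (hcM : ∀ m, c * M l m ≤ N i m) (j : Fin n) :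
    c * mtMul M P l j ≤ mtMul N P i j := by
  unfold mtMul
  rw [Real.mul_iSup_of_nonneg hc]
  refine Real.iSup_le (fun m => ?_) (Real.iSup_nonneg fun m => ?_)
  · rw [← mul_assoc]
    exact (mul_le_mul_of_nonneg_right (hcM m) (hP m j)).trans
      (le_iSup_fin (fun m => N i m * P m j) m)
  · exact mul_nonneg ((mul_nonneg hc (hM l m)).trans (hcM m)) (hP m j)

/-- Prepending an `A`-step to an alternating product increases its first exponent. -/
lemma mul_mtChain_le (hA : ∀ i j, 0 ≤ A i j) (hB : ∀ i j, 0 ≤ B i j) (k : ℕ)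
    (v : Fin (k + 1) → ℕ) (i l j : Fin n) :
    A i l * mtChain A B k v l j ≤ mtChain A B k (v + Pi.single 0 1) i j := by
  cases k with
  | zero =>
    simp only [mtChain, Pi.add_apply, Pi.single_eq_same, mtPow]
    exact mul_le_mtMul _ _ i l j
  | succ k =>
    simp only [mtChain, Pi.add_apply, Pi.single_eq_same]
    exact mul_mtMul_le (mtPow_nonneg hA _) (mtMul_nonneg hB (mtChain_nonneg hA hB k _)) (hA i l)
      (fun m => mul_le_mtMul A (mtPow A (v 0)) i l m) j

lemma mul_mtF_le_A (hA : ∀ i j, 0 ≤ A i j) (hB : ∀ i j, 0 ≤ B i j) (k m : ℕ)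
    (i l j : Fin n) : A i l * mtF A B k m l j ≤ mtF A B k (m + 1) i j := by
  unfold mtF
  rw [Real.mul_iSup_of_nonneg (hA i l)]
  refine Real.iSup_le (fun v => ?_) (mtF_nonneg hA hB _ _ _ _)
  refine (mul_mtChain_le hA hB k v.1 i l j).trans ?_
  refine le_iSup_fin (fun v : { v : Fin (k + 1) → ℕ // ∑ t, v t = m + 1 } =>
    mtChain A B k v.1 i j) ⟨v.1 + Pi.single 0 1, ?_⟩
  simp [Finset.sum_add_distrib, v.2]

lemma mul_mtF_le_B (hA : ∀ i j, 0 ≤ A i j) (hB : ∀ i j, 0 ≤ B i j) (k m : ℕ)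
    (i l j : Fin n) : B i l * mtF A B k m l j ≤ mtF A B (k + 1) m i j := by
  unfold mtF
  rw [Real.mul_iSup_of_nonneg (hB i l)]
  refine Real.iSup_le (fun v => ?_) (mtF_nonneg hA hB _ _ _ _)
  have hle : B i l * mtChain A B k v.1 l j ≤
      mtChain A B (k + 1) (Fin.cons 0 v.1 : Fin (k + 2) → ℕ) i j := by
    simp only [mtChain, Fin.cons_zero, Fin.cons_succ, mtPow]
    refine (mul_le_mtMul B (mtChain A B k v.1) i l j).trans ?_
    simpa using mul_le_mtMul (1 : Matrix (Fin n) (Fin n) ℝ) (mtMul B (mtChain A B k v.1)) i i j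
  refine hle.trans ?_
  refine le_iSup_fin (fun v : { v : Fin (k + 1 + 1) → ℕ // ∑ t, v t = m } =>
    mtChain A B (k + 1) v.1 i j) ⟨(Fin.cons 0 v.1 : Fin (k + 2) → ℕ), ?_⟩
  rw [Fin.sum_univ_succ]
  simp [v.2]

lemma one_le_mtF (i : Fin n) : 1 ≤ mtF A B 0 0 i i := by
  have := le_iSup_fin (fun v : { v : Fin (0 + 1) → ℕ // ∑ t, v t = 0 } =>
    mtChain A B 0 v.1 i i) ⟨fun _ => 0, by simp⟩
  simpa [mtChain, mtPow, mtF] using this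

/-- A walk for `max(A / a, B / b)` uses `r` steps of `A` and `s` steps of `B`. Its weight is
bounded by `F_{sr}`, and by the pure powers when only one of the matrices is used. -/
lemma walk_le (hA : ∀ i j, 0 ≤ A i j) (hB : ∀ i j, 0 ≤ B i j) {a b : ℝ} (ha : 0 < a)
    (hb : 0 < b) (k : ℕ) : ∀ p : ℕ → Fin n, ∃ r s, r + s = k ∧
      walkWt (fun i j => max (A i j / a) (B i j / b)) p k * (a ^ r * b ^ s) ≤
        mtF A B s r (p 0) (p k) ∧
      (s = 0 → walkWt (fun i j => max (A i j / a) (B i j / b)) p k * (a ^ r * b ^ s) ≤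
        mtPow A r (p 0) (p k)) ∧
      (r = 0 → walkWt (fun i j => max (A i j / a) (B i j / b)) p k * (a ^ r * b ^ s) ≤
        mtPow B s (p 0) (p k)) := by
  induction k with
  | zero =>
    intro p
    exact ⟨0, 0, rfl, by simpa [walkWt] using one_le_mtF (p 0), by simp [walkWt, mtPow],
      by simp [walkWt, mtPow]⟩
  | succ k ih =>
    intro p
    obtain ⟨r, s, hrs, hF, hPA, hPB⟩ := ih fun t => p (t + 1)
    have hW : walkWt (fun i j => max (A i j / a) (B i j / b)) p (k + 1) =
        max (A (p 0) (p 1) / a) (B (p 0) (p 1) / b) *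
          walkWt (fun i j => max (A i j / a) (B i j / b)) (fun t => p (t + 1)) k := by
      simp only [walkWt, Finset.prod_range_succ']
      rw [mul_comm]
    rw [hW]
    set w := walkWt (fun i j => max (A i j / a) (B i j / b)) (fun t => p (t + 1)) k
    rcases le_total (A (p 0) (p 1) / a) (B (p 0) (p 1) / b) with hm | hm
    · have hB' := hB (p 0) (p 1)
      have e : max (A (p 0) (p 1) / a) (B (p 0) (p 1) / b) * w * (a ^ r * b ^ (s + 1)) =
          B (p 0) (p 1) * (w * (a ^ r * b ^ s)) := by
        rw [max_eq_right hm, pow_succ]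
        field_simp
      refine ⟨r, s + 1, by omega, ?_, by simp, fun hr => ?_⟩ <;> rw [e]
      · exact (mul_le_mul_of_nonneg_left hF hB').trans (mul_mtF_le_B hA hB _ _ _ _ _)
      · exact (mul_le_mul_of_nonneg_left (hPB hr) hB').trans (mul_le_mtMul _ _ _ _ _)
    · have hA' := hA (p 0) (p 1)
      have e : max (A (p 0) (p 1) / a) (B (p 0) (p 1) / b) * w * (a ^ (r + 1) * b ^ s) =
          A (p 0) (p 1) * (w * (a ^ r * b ^ s)) := by
        rw [max_eq_left hm, pow_succ]
        field_simp
      refine ⟨r + 1, s, by omega, ?_, fun hs => ?_, by simp⟩ <;> rw [e]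
      · exact (mul_le_mul_of_nonneg_left hF hA').trans (mul_mtF_le_A hA hB _ _ _ _ _)
      · exact (mul_le_mul_of_nonneg_left (hPA hs) hA').trans (mul_le_mtMul _ _ _ _ _)

end WalkCount

/-! ### Feasibility -/

section Bounds

variable {n : ℕ} {A B : Matrix (Fin n) (Fin n) ℝ} {g h : Fin n → ℝ}

lemma mtPow_diag_le (hA : ∀ i j, 0 ≤ A i j) {a : ℝ} (ha : mtSpecR A ≤ a) {k : ℕ} (hk : 1 ≤ k)
    (hkn : k ≤ n) (i : Fin n) : mtPow A k i i ≤ a ^ k := by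
  refine (le_iSup_fin (fun i => mtPow A k i i) i).trans ?_
  refine le_pow_of_root (mtTrace_nonneg (mtPow_nonneg hA k)) (by omega) (le_trans ?_ ha)
  exact le_biSup_finset _ (fun k : ℕ => (mtTrace (mtPow A k)) ^ (1 / (k : ℝ)))
    (Finset.mem_Icc.2 ⟨hk, hkn⟩)

lemma mul_le_of_mtHMG_le (hh : ∀ i, 0 < h i) {c : ℝ} (hc : mtHMG h A g ≤ c) (i j : Fin n) :
    A i j * g j ≤ c * h i := by
  rw [← div_le_iff₀ (hh i)]
  exact (le_iSup_fin₂ (fun i j => A i j * g j / h i) i j).trans hc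

lemma mtPow_mul_g_le (hA : ∀ i j, 0 ≤ A i j) (hg : ∀ i, 0 ≤ g i) (hh : ∀ i, 0 < h i) {a : ℝ}
    (ha : mtBnd h A g ≤ a) {k : ℕ} (hk : 1 ≤ k) (hkn : k < n) (i j : Fin n) :
    mtPow A k i j * g j ≤ a ^ k * h i := by
  refine mul_le_of_mtHMG_le hh ?_ i j
  refine le_pow_of_root (mtHMG_nonneg hg hh (mtPow_nonneg hA k)) (by omega) (le_trans ?_ ha)
  exact le_biSup_finset _ (fun k : ℕ => (mtHMG h (mtPow A k) g) ^ (1 / (k : ℝ)))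
    (Finset.mem_Icc.2 ⟨hk, by omega⟩)

lemma mtF_diag_le (hA : ∀ i j, 0 ≤ A i j) (hB : ∀ i j, 0 ≤ B i j) {a b : ℝ} (hb : 0 < b)
    (hH : mtH A B h g b ≤ a) {k m : ℕ} (hk : 1 ≤ k) (hm : 1 ≤ m) (hkm : k + m ≤ n) (i : Fin n) :
    mtF A B k m i i ≤ a ^ m * b ^ k := by
  refine (le_iSup_fin (fun i => mtF A B k m i i) i).trans ?_
  refine le_mul_pow_of_root (mtTrace_nonneg (mtF_nonneg hA hB k m)) hb (by omega)
    (le_trans ?_ ((le_max_left _ _).trans hH))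
  refine le_trans ?_ (le_biSup_finset _ (fun k : ℕ => ⨆ m ∈ Finset.Icc 1 (n - k),
    b ^ (-(k : ℝ) / (m : ℝ)) * (mtTrace (mtF A B k m)) ^ (1 / (m : ℝ))) (k := k)
    (Finset.mem_Icc.2 ⟨hk, by omega⟩))
  exact le_biSup_finset _ (fun m : ℕ =>
    b ^ (-(k : ℝ) / (m : ℝ)) * (mtTrace (mtF A B k m)) ^ (1 / (m : ℝ)))
    (Finset.mem_Icc.2 ⟨hm, by omega⟩)

lemma mtF_mul_g_le (hA : ∀ i j, 0 ≤ A i j) (hB : ∀ i j, 0 ≤ B i j) (hg : ∀ i, 0 ≤ g i)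
    (hh : ∀ i, 0 < h i) {a b : ℝ} (hb : 0 < b) (hH : mtH A B h g b ≤ a) {k m : ℕ} (hk : 1 ≤ k)
    (hm : 1 ≤ m) (hkm : k + m < n) (i j : Fin n) :
    mtF A B k m i j * g j ≤ a ^ m * b ^ k * h i := by
  refine mul_le_of_mtHMG_le hh ?_ i j
  refine le_mul_pow_of_root (mtHMG_nonneg hg hh (mtF_nonneg hA hB k m)) hb (by omega)
    (le_trans ?_ ((le_max_right _ _).trans hH))
  refine le_trans ?_ (le_biSup_finset _ (fun k : ℕ => ⨆ m ∈ Finset.Icc 1 (n - k - 1),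
    b ^ (-(k : ℝ) / (m : ℝ)) * (mtHMG h (mtF A B k m) g) ^ (1 / (m : ℝ))) (k := k)
    (Finset.mem_Icc.2 ⟨hk, by omega⟩))
  exact le_biSup_finset _ (fun m : ℕ =>
    b ^ (-(k : ℝ) / (m : ℝ)) * (mtHMG h (mtF A B k m) g) ^ (1 / (m : ℝ)))
    (Finset.mem_Icc.2 ⟨hm, by omega⟩)

lemma exists_feasible (hA : ∀ i j, 0 ≤ A i j) (hB : ∀ i j, 0 ≤ B i j) (hg : ∀ i, 0 ≤ g i)
    (hh : ∀ i, 0 < h i) (hgh : ∀ i, g i ≤ h i) {a b : ℝ} (ha : 0 < a) (hb : 0 < b)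
    (hAa : mtSpecR A ≤ a) (hAg : mtBnd h A g ≤ a) (hBb : mtSpecR B ≤ b) (hBg : mtBnd h B g ≤ b)
    (hH : mtH A B h g b ≤ a) :
    ∃ x : Fin n → ℝ, (∀ i, 0 < x i) ∧ (∀ i, g i ≤ x i) ∧ (∀ i, x i ≤ h i) ∧
      (∀ i j, A i j * x j ≤ a * x i) ∧ ∀ i j, B i j * x j ≤ b * x i := by
  have hC : ∀ i j, 0 ≤ max (A i j / a) (B i j / b) := fun i j =>
    le_max_of_le_left (div_nonneg (hA i j) ha.le)
  have hcyc : ∀ (p : ℕ → Fin n) (k : ℕ), 1 ≤ k → k ≤ n → p k = p 0 →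
      walkWt (fun i j => max (A i j / a) (B i j / b)) p k ≤ 1 := by
    intro p k hk hkn hp
    obtain ⟨r, s, hrs, hF, hPA, hPB⟩ := walk_le hA hB ha hb k p
    rw [hp] at hF hPA hPB
    have hpos : 0 < a ^ r * b ^ s := by positivity
    refine le_of_mul_le_mul_right ?_ hpos
    rw [one_mul]
    rcases Nat.eq_zero_or_pos s with hs | hs
    · refine (hPA hs).trans ?_
      subst hs
      simpa using mtPow_diag_le hA hAa (k := r) (by omega) (by omega) (p 0)
    rcases Nat.eq_zero_or_pos r with hr | hr
    · refine (hPB hr).trans ?_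
      subst hr
      simpa using mtPow_diag_le hB hBb (k := s) (by omega) (by omega) (p 0)
    exact hF.trans (mtF_diag_le hA hB hb hH hs hr (by omega) (p 0))
  have hpath : ∀ (p : ℕ → Fin n) (k : ℕ), k < n →
      walkWt (fun i j => max (A i j / a) (B i j / b)) p k * g (p k) ≤ h (p 0) := by
    intro p k hkn
    obtain ⟨r, s, hrs, hF, hPA, hPB⟩ := walk_le hA hB ha hb k p
    have hpos : 0 < a ^ r * b ^ s := by positivity
    rcases Nat.eq_zero_or_pos k with hk | hk
    · subst hk
      simpa [walkWt] using hgh (p 0)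
    refine le_of_mul_le_mul_left ?_ hpos
    rw [← mul_assoc, mul_comm (a ^ r * b ^ s)]
    rcases Nat.eq_zero_or_pos s with hs | hs
    · refine (mul_le_mul_of_nonneg_right (hPA hs) (hg _)).trans ?_
      subst hs
      simpa using mtPow_mul_g_le hA hg hh hAg (k := r) (by omega) (by omega) (p 0) (p k)
    rcases Nat.eq_zero_or_pos r with hr | hr
    · refine (mul_le_mul_of_nonneg_right (hPB hr) (hg _)).trans ?_
      subst hr
      simpa using mtPow_mul_g_le hB hg hh hBg (k := s) (by omega) (by omega) (p 0) (p k)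
    exact (mul_le_mul_of_nonneg_right hF (hg _)).trans
      (mtF_mul_g_le hA hB hg hh hb hH hs hr (by omega) (p 0) (p k))
  obtain ⟨x, hx, hgx, hxh, hCx⟩ := exists_potential
    (C := fun i j => max (A i j / a) (B i j / b)) hC hg hh hcyc hpath
  refine ⟨x, hx, hgx, hxh, fun i j => ?_, fun i j => ?_⟩
  · have := (mul_le_mul_of_nonneg_right (le_max_left (A i j / a) (B i j / b)) (hx j).le).trans
      (hCx i j)
    rwa [div_mul_eq_mul_div, div_le_iff₀ ha, mul_comm (x i)] at this
  · have := (mul_le_mul_of_nonneg_right (le_max_right (A i j / a) (B i j / b)) (hx j).le).trans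
      (hCx i j)
    rwa [div_mul_eq_mul_div, div_le_iff₀ hb, mul_comm (x i)] at this

end Bounds

/-- If `H(max(μ, δ)) ≤ max(λ, γ)`, the Pareto front reduces to the single point
`(max(λ, γ), max(μ, δ))`: it is attained by some feasible `x`, and every feasible `x`
is dominated by it. -/
theorem pareto_front_single_point {n : ℕ} (A B : Matrix (Fin n) (Fin n) ℝ)
    (hA : ∀ i j, 0 ≤ A i j) (hB : ∀ i j, 0 ≤ B i j)
    (hA0 : ∃ i j, 0 < A i j) (hB0 : ∃ i j, 0 < B i j)
    (g h : Fin n → ℝ) (hg : ∀ i, 0 ≤ g i) (hh : ∀ i, 0 < h i) (hgh : ∀ i, g i ≤ h i)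
    (hlg : 0 < max (mtSpecR A) (mtBnd h A g))
    (hmd : 0 < max (mtSpecR B) (mtBnd h B g))
    (hH : mtH A B h g (max (mtSpecR B) (mtBnd h B g)) ≤ max (mtSpecR A) (mtBnd h A g)) :
    (∃ x : Fin n → ℝ, (∀ i, 0 < x i) ∧ (∀ i, g i ≤ x i) ∧ (∀ i, x i ≤ h i) ∧
        (⨆ i, ⨆ j, A i j * x j / x i) = max (mtSpecR A) (mtBnd h A g) ∧
        (⨆ i, ⨆ j, B i j * x j / x i) = max (mtSpecR B) (mtBnd h B g)) ∧
      ∀ x : Fin n → ℝ, (∀ i, 0 < x i) → (∀ i, g i ≤ x i) → (∀ i, x i ≤ h i) →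
        max (mtSpecR A) (mtBnd h A g) ≤ (⨆ i, ⨆ j, A i j * x j / x i) ∧
        max (mtSpecR B) (mtBnd h B g) ≤ (⨆ i, ⨆ j, B i j * x j / x i) := by
  have hlow : ∀ x : Fin n → ℝ, (∀ i, 0 < x i) → (∀ i, g i ≤ x i) → (∀ i, x i ≤ h i) →
      max (mtSpecR A) (mtBnd h A g) ≤ (⨆ i, ⨆ j, A i j * x j / x i) ∧
      max (mtSpecR B) (mtBnd h B g) ≤ (⨆ i, ⨆ j, B i j * x j / x i) :=
    fun x hx hgx hxh => ⟨le_obj hA hg hh hx hgx hxh, le_obj hB hg hh hx hgx hxh⟩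
  refine ⟨?_, hlow⟩
  obtain ⟨x, hx, hgx, hxh, hAx, hBx⟩ := exists_feasible hA hB hg hh hgh hlg hmd
    (le_max_left _ _) (le_max_right _ _) (le_max_left _ _) (le_max_right _ _) hH
  refine ⟨x, hx, hgx, hxh, le_antisymm ?_ (hlow x hx hgx hxh).1,
    le_antisymm ?_ (hlow x hx hgx hxh).2⟩
  · refine Real.iSup_le (fun i => Real.iSup_le (fun j => ?_) hlg.le) hlg.le
    exact (div_le_iff₀ (hx i)).2 (hAx i j)
  · refine Real.iSup_le (fun i => Real.iSup_le (fun j => ?_) hmd.le) hmd.le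
    exact (div_le_iff₀ (hx i)).2 (hBx i j)
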